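/- Let P be a polymatroid of rank r on [m] such that rk_P({i}) = r for some i ∈ [m]. Define integers a_k (for k ∈ ℤ_{≥0}^m with |k| ≤ r) by the expansion Σ_{k ∈ I(P)∩ℤ^m} t^{(k)} = Σ_k (−1)^{r−|k|} a_k t^{[k]} in ℚ[t_1,…,t_m]. Then the support {(k, r−|k|) : a_k ≠ 0} ⊆ ℤ_{≥0}^{m+1} of the homogeneous polynomial H̃(t_1,…,t_m,t_0) = Σ_k a_k t^k t_0^{r−|k|} is the set of lattice points of the base polytope of some polymatroid on the (m+1)-element set {0,1,…,m}. -/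

import Mathlib

open MvPolynomial Finset

/-- The rank-function axioms of a polymatroid on a finite ground set. -/
def IsPolymatroid {α : Type*} [Fintype α] [DecidableEq α] (rk : Finset α → ℕ) : Prop :=
  rk ∅ = 0 ∧ (∀ I J : Finset α, I ⊆ J → rk I ≤ rk J) ∧
    ∀ I J : Finset α, rk (I ∩ J) + rk (I ∪ J) ≤ rk I + rk J

/-- The base polytope `B(P)` of a polymatroid. -/
def basePolytope {α : Type*} [Fintype α] (rk : Finset α → ℕ) : Set (α → ℝ) :=
  {x | (∀ i, 0 ≤ x i) ∧ (∑ i, x i) = (rk Finset.univ : ℝ) ∧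
      ∀ I : Finset α, (∑ i ∈ I, x i) ≤ (rk I : ℝ)}

/-- The independence polytope `I(P)` of a polymatroid. -/
def indepPolytope {α : Type*} [Fintype α] (rk : Finset α → ℕ) : Set (α → ℝ) :=
  {x | (∀ i, 0 ≤ x i) ∧ ∀ I : Finset α, (∑ i ∈ I, x i) ≤ (rk I : ℝ)}

/-- `binomLower p k` is `p^{(k)} = binom(p + k - 1, k) = p(p+1)⋯(p+k-1)/k!`. -/
noncomputable def binomLower {σ K : Type*} [Field K] (p : MvPolynomial σ K) (k : ℕ) :
    MvPolynomial σ K :=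
  (k.factorial : K)⁻¹ • ∏ j ∈ Finset.range k, (p + MvPolynomial.C (j : K))

/-- `binomUpper p k` is `p^{[k]} = binom(p + k, k) = (p+1)(p+2)⋯(p+k)/k!`. -/
noncomputable def binomUpper {σ K : Type*} [Field K] (p : MvPolynomial σ K) (k : ℕ) :
    MvPolynomial σ K :=
  (k.factorial : K)⁻¹ • ∏ j ∈ Finset.range k, (p + MvPolynomial.C ((j : K) + 1))

/-!
Write `1_S` for the indicator vector of `S`. Pascal's rule `t^{(k)} = t^{[k]} - t^{[k-1]}` expands
`∑_{κ ∈ I(P)} t^{(κ)}` in the basis `t^{[κ]}`, with coefficients `∑_S (-1)^{|S|}` over all `S` with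
`κ + 1_S ∈ I(P)`. Let `rk {d} = r`. Then `d` can be added to such an `S` exactly when
`|κ| + |S| < r`, so the sum collapses and `a_κ` is the number of `S` avoiding `d` for which
`κ + 1_S` is a base of `P`. Hence the support consists of the `(|S|, κ)` such that `κ + 1_S` is a
base and `d ∉ S`. By the rank formula for the matroid of all `S` with `κ + 1_S ∈ I(P)`, such an `S`
exists if and only if `(r - |κ|, κ)` satisfies the inequalities of the submodular function
`A ↦ rk(A ∖ {0}) + [0 ∈ A] |E ∖ A|`, where `E = [m] ∖ {d}`. The monotone closure of this function
is the required rank function.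
-/

section BinomialBasis

variable {σ K : Type*} [Field K]

theorem binomLower_zero (p : MvPolynomial σ K) : binomLower p 0 = 1 := by
  simp [binomLower]

theorem binomUpper_zero (p : MvPolynomial σ K) : binomUpper p 0 = 1 := by
  simp [binomUpper]

theorem binomLower_succ [CharZero K] (p : MvPolynomial σ K) (k : ℕ) :
    binomLower p (k + 1) = binomUpper p (k + 1) - binomUpper p k := by
  have hfact : (k.factorial : K)⁻¹ = ((k + 1).factorial : K)⁻¹ * ((k : K) + 1) := by
    have : (k.factorial : K) ≠ 0 := by exact_mod_cast k.factorial_ne_zero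
    have : (k : K) + 1 ≠ 0 := by exact_mod_cast k.succ_ne_zero
    rw [Nat.factorial_succ]
    push_cast
    field_simp
  rw [binomLower, binomUpper, binomUpper, prod_range_succ', prod_range_succ, hfact]
  simp only [smul_eq_C_mul, Nat.cast_add, Nat.cast_one, Nat.cast_zero, map_add, map_one, map_zero,
    map_mul]
  ring

theorem eval_binomUpper_X [CharZero K] (n : σ → ℕ) (i : σ) (k : ℕ) :
    eval (fun j => -1 - (n j : K)) (binomUpper (X i) k) = (-1) ^ k * (n i).choose k := by
  have hfactor : ∀ j : ℕ, (-1 - (n i : K)) + (j + 1) = -1 * (n i - j) := fun j => by ring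
  simp only [binomUpper, smul_eval, eval_prod, map_add, eval_X, eval_C, hfactor,
    prod_mul_distrib, prod_const, card_range]
  rw [← descPochhammer_eval_eq_prod_range, descPochhammer_eval_eq_descFactorial,
    Nat.descFactorial_eq_factorial_mul_choose]
  have : (k.factorial : K) ≠ 0 := by exact_mod_cast k.factorial_ne_zero
  push_cast
  field_simp

variable [Fintype σ] (K)

/-- The polynomial `t^{(κ)} = ∏ i, t_i^{(κ_i)}` of a multi-index `κ`. -/
noncomputable def multiBinomLower (κ : σ → ℕ) : MvPolynomial σ K :=
  ∏ i, binomLower (X i) (κ i)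

/-- The polynomial `t^{[κ]} = ∏ i, t_i^{[κ_i]}` of a multi-index `κ`. -/
noncomputable def multiBinomUpper (κ : σ → ℕ) : MvPolynomial σ K :=
  ∏ i, binomUpper (X i) (κ i)

variable [CharZero K]

theorem eval_multiBinomUpper (n κ : σ → ℕ) :
    eval (fun j => -1 - (n j : K)) (multiBinomUpper K κ) =
      ∏ i, (-1) ^ κ i * ((n i).choose (κ i) : K) := by
  simp only [multiBinomUpper, eval_prod, eval_binomUpper_X]

-- The matrix `∏ i, binom(n_i, κ_i)` of evaluations at the points `-1 - n` is triangular.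
theorem linearIndependent_multiBinomUpper :
    LinearIndependent K (multiBinomUpper K : (σ → ℕ) → MvPolynomial σ K) := by
  classical
  rw [linearIndependent_iff']
  intro s c hsum
  by_contra! hne
  obtain ⟨κ₀, hκ₀⟩ := hne
  obtain ⟨n, hn, hmin⟩ := ({κ ∈ s | c κ ≠ 0} : Finset (σ → ℕ)).exists_minimal
    ⟨κ₀, mem_filter.2 hκ₀⟩
  obtain ⟨hns, hcn⟩ := mem_filter.1 hn
  have heval := congrArg (eval fun j => -1 - (n j : K)) hsum
  simp only [map_sum, smul_eval, eval_multiBinomUpper, map_zero] at heval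
  rw [sum_eq_single_of_mem n hns] at heval
  · simp [hcn, prod_eq_zero_iff] at heval
  · intro κ hκ hκn
    by_cases hc : c κ = 0
    · rw [hc, zero_mul]
    · obtain ⟨i, hi⟩ : ∃ i, n i < κ i := by
        by_contra! hle
        exact hκn (le_antisymm hle (hmin (mem_filter.2 ⟨hκ, hc⟩) hle))
      rw [prod_eq_zero (mem_univ i), mul_zero]
      rw [Nat.choose_eq_zero_of_lt hi, Nat.cast_zero, mul_zero]

end BinomialBasis

section IndicatorVec

variable {σ : Type*} [DecidableEq σ]

/-- The `0/1` indicator vector `1_S` of a finite set `S`. -/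
def indicatorVec (S : Finset σ) : σ → ℕ := fun i => if i ∈ S then 1 else 0

theorem indicatorVec_empty : indicatorVec (∅ : Finset σ) = 0 := by
  ext i
  simp [indicatorVec]

theorem sum_indicatorVec (J S : Finset σ) : ∑ i ∈ J, indicatorVec S i = #(J ∩ S) := by
  simp [indicatorVec]

theorem indicatorVec_le_iff {S : Finset σ} {κ : σ → ℕ} :
    indicatorVec S ≤ κ ↔ ∀ i ∈ S, κ i ≠ 0 := by
  simp only [Pi.le_def, indicatorVec, ← Nat.one_le_iff_ne_zero]
  refine forall_congr' fun i => ?_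
  split_ifs with hi <;> simp [hi]

end IndicatorVec

section ChangeOfBasis

variable {σ K : Type*} [Field K] [CharZero K] [Fintype σ] [DecidableEq σ]

open Classical in
theorem multiBinomLower_eq_sum (κ : σ → ℕ) :
    multiBinomLower K κ = ∑ S : Finset σ,
      if indicatorVec S ≤ κ then (-1 : K) ^ #S • multiBinomUpper K (κ - indicatorVec S) else 0 := by
  have hlower : ∀ i, binomLower (X i : MvPolynomial σ K) (κ i) =
      binomUpper (X i) (κ i) - if κ i = 0 then 0 else binomUpper (X i) (κ i - 1) := by
    intro i
    rcases κ i with _ | k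
    · simp [binomLower_zero, binomUpper_zero]
    · simp [binomLower_succ]
  simp only [multiBinomLower, hlower, prod_sub, powerset_univ]
  refine sum_congr rfl fun S _ => ?_
  split_ifs with hS
  · rw [smul_eq_C_mul, map_pow, map_neg, map_one, mul_assoc, multiBinomUpper,
      ← prod_sdiff (subset_univ S)]
    congr 2 <;> refine prod_congr rfl fun i hi => ?_
    · simp [indicatorVec, (mem_sdiff.1 hi).2]
    · simp [indicatorVec, hi, indicatorVec_le_iff.1 hS i hi]
  · obtain ⟨i, hi, hκi⟩ : ∃ i ∈ S, κ i = 0 := by simpa [indicatorVec_le_iff] using hS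
    rw [prod_eq_zero hi, mul_zero]
    exact if_pos hκi

theorem sum_multiBinomLower_eq_sum {I M : Finset (σ → ℕ)}
    (hIM : ∀ κ S, κ + indicatorVec S ∈ I → κ ∈ M) :
    ∑ κ ∈ I, multiBinomLower K κ =
      ∑ κ ∈ M, (∑ S with κ + indicatorVec S ∈ I, (-1 : K) ^ #S) • multiBinomUpper K κ := by
  classical
  simp only [multiBinomLower_eq_sum, sum_smul, sum_filter (s := univ), ite_smul, zero_smul]
  rw [sum_comm, sum_comm (s := M)]
  refine sum_congr rfl fun S _ => ?_
  simp only [← sum_filter]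
  refine sum_nbij' (· - indicatorVec S) (· + indicatorVec S) ?_ ?_ ?_ ?_ fun _ _ => rfl
  · intro κ hκ
    obtain ⟨hκI, hSκ⟩ := mem_filter.1 hκ
    have hadd : κ - indicatorVec S + indicatorVec S ∈ I := by rwa [tsub_add_cancel_of_le hSκ]
    exact mem_filter.2 ⟨hIM _ S hadd, hadd⟩
  · exact fun κ hκ => mem_filter.2 ⟨(mem_filter.1 hκ).2, le_add_self⟩
  · exact fun κ hκ => tsub_add_cancel_of_le (mem_filter.1 hκ).2
  · exact fun κ _ => add_tsub_cancel_right κ (indicatorVec S)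

theorem multiBinomUpper_coeff_eq_sum {I M : Set (σ → ℕ)} [DecidablePred (· ∈ I)] (hM : M.Finite)
    (hIM : ∀ κ S, κ + indicatorVec S ∈ I → κ ∈ M) {c : (σ → ℕ) → K}
    (h : ∑ᶠ κ ∈ I, multiBinomLower K κ = ∑ᶠ κ ∈ M, c κ • multiBinomUpper K κ)
    {κ : σ → ℕ} (hκ : κ ∈ M) :
    c κ = ∑ S with κ + indicatorVec S ∈ I, (-1) ^ #S := by
  have hIsub : I ⊆ M := fun κ hκ => hIM κ ∅ (by rwa [indicatorVec_empty, add_zero])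
  have hI : I.Finite := hM.subset hIsub
  rw [finsum_mem_eq_finite_toFinset_sum _ hI, finsum_mem_eq_finite_toFinset_sum _ hM,
    sum_multiBinomLower_eq_sum (M := hM.toFinset) (by simpa using hIM), eq_comm, ← sub_eq_zero,
    ← sum_sub_distrib] at h
  simp only [← sub_smul] at h
  have hcoeff := linearIndependent_iff'.1 (linearIndependent_multiBinomUpper K) _ _ h κ
    (hM.mem_toFinset.2 hκ)
  simpa [sub_eq_zero] using hcoeff

end ChangeOfBasis

section EulerCharacteristic

-- Pairing `S` with `insert d S` cancels every set of cardinality less than `n`.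
theorem sum_neg_one_pow_card_of_insert_iff {α R : Type*} [Fintype α] [DecidableEq α] [CommRing R]
    {p : Finset α → Prop} [DecidablePred p] {d : α} {n : ℕ} (hcard : ∀ S, p S → #S ≤ n)
    (hinsert : ∀ S, d ∉ S → (p (insert d S) ↔ p S ∧ #S < n)) :
    ∑ S with p S, (-1 : R) ^ #S = (-1) ^ n * #{S | d ∉ S ∧ p S ∧ #S = n} := by
  have hfilter : ({S | d ∉ S ∧ p S ∧ #S = n} : Finset (Finset α)) =
      {S ∈ (univ.erase d).powerset | p S ∧ #S = n} := by
    ext S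
    simp [subset_erase]
  rw [sum_filter, ← powerset_univ, ← insert_erase (mem_univ d),
    sum_powerset_insert (notMem_erase _ _), ← sum_add_distrib, insert_erase (mem_univ d),
    powerset_univ, hfilter, card_filter, Nat.cast_sum, mul_sum]
  refine sum_congr rfl fun S hS => ?_
  have hdS : d ∉ S := (subset_erase.1 (mem_powerset.1 hS)).2
  rw [card_insert_of_notMem hdS]
  simp only [hinsert S hdS]
  by_cases hpS : p S
  · rcases (hcard S hpS).lt_or_eq with hlt | rfl
    · simp [hpS, hlt, hlt.ne, pow_succ]
    · simp [hpS]
  · simp [hpS]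

end EulerCharacteristic

section Independence

variable {α : Type*} {rk : Finset α → ℕ} {x y : α → ℕ}

/-- `x` is a lattice point of the independence polytope of `rk`. -/
def IsIndepVec (rk : Finset α → ℕ) (x : α → ℕ) : Prop :=
  ∀ J : Finset α, ∑ i ∈ J, x i ≤ rk J

theorem natCast_mem_indepPolytope [Fintype α] :
    (fun i => (x i : ℝ)) ∈ indepPolytope rk ↔ IsIndepVec rk x := by
  simp only [indepPolytope, IsIndepVec, Set.mem_ofPred_eq, Nat.cast_nonneg, implies_true, true_and]
  exact_mod_cast Iff.rfl

theorem natCast_mem_basePolytope [Fintype α] :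
    (fun i => (x i : ℝ)) ∈ basePolytope rk ↔ ∑ i, x i = rk univ ∧ IsIndepVec rk x := by
  simp only [basePolytope, IsIndepVec, Set.mem_ofPred_eq, Nat.cast_nonneg, implies_true, true_and]
  exact_mod_cast Iff.rfl

theorem IsIndepVec.anti (hy : IsIndepVec rk y) (hxy : x ≤ y) : IsIndepVec rk x :=
  fun J => (sum_le_sum fun i _ => hxy i).trans (hy J)

variable [DecidableEq α]

theorem sum_add_single_one (x : α → ℕ) (d : α) (J : Finset α) :
    ∑ i ∈ J, (x + Pi.single d 1 : α → ℕ) i = ∑ i ∈ J, x i + if d ∈ J then 1 else 0 := by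
  simp only [Pi.add_apply, sum_add_distrib, sum_pi_single']

theorem sum_add_indicatorVec (x : α → ℕ) (S J : Finset α) :
    ∑ i ∈ J, (x + indicatorVec S) i = ∑ i ∈ J, x i + #(J ∩ S) := by
  simp only [Pi.add_apply, sum_add_distrib, sum_indicatorVec]

theorem indicatorVec_insert {d : α} {S : Finset α} (hd : d ∉ S) :
    indicatorVec (insert d S) = indicatorVec S + Pi.single d 1 := by
  ext i
  by_cases hi : i = d
  · subst hi
    simp [indicatorVec, hd]
  · simp [indicatorVec, hi]

theorem IsIndepVec.exists_tight_of_not_add_single (hx : IsIndepVec rk x) {d : α}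
    (hd : ¬ IsIndepVec rk (x + Pi.single d 1)) : ∃ J, d ∈ J ∧ ∑ i ∈ J, x i = rk J := by
  simp only [IsIndepVec, sum_add_single_one, not_forall, not_le] at hd
  obtain ⟨J, hJ⟩ := hd
  have hxJ := hx J
  split_ifs at hJ with hdJ
  · exact ⟨J, hdJ, by omega⟩
  · omega

variable [Fintype α]

theorem IsIndepVec.tight_union (hP : IsPolymatroid rk) (hx : IsIndepVec rk x) {I J : Finset α}
    (hI : ∑ i ∈ I, x i = rk I) (hJ : ∑ i ∈ J, x i = rk J) :
    ∑ i ∈ I ∪ J, x i = rk (I ∪ J) := by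
  have hsub := hP.2.2 I J
  have hmod := sum_union_inter (s₁ := I) (s₂ := J) (f := x)
  have hunion := hx (I ∪ J)
  have hinter := hx (I ∩ J)
  omega

theorem IsIndepVec.exists_tight_superset (hP : IsPolymatroid rk) (hx : IsIndepVec rk x)
    {F : Finset α} (hF : ∀ e ∈ F, ∃ T, e ∈ T ∧ ∑ i ∈ T, x i = rk T) :
    ∃ T, F ⊆ T ∧ ∑ i ∈ T, x i = rk T := by
  choose! T hmem htight using hF
  refine ⟨F.sup T, fun e he => le_sup (f := T) he (hmem e he), ?_⟩
  exact sup_induction (p := fun J => ∑ i ∈ J, x i = rk J) (by simp [hP.1])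
    (fun _ hI _ hJ => hx.tight_union hP hI hJ) htight

theorem isIndepVec_add_single_iff (hP : IsPolymatroid rk) {d : α} (hd : rk {d} = rk univ) :
    IsIndepVec rk (x + Pi.single d 1) ↔ IsIndepVec rk x ∧ ∑ i, x i < rk univ := by
  refine ⟨fun h => ⟨h.anti le_self_add, ?_⟩, fun ⟨hx, hlt⟩ J => ?_⟩
  · have huniv := h univ
    rw [sum_add_single_one, if_pos (mem_univ d)] at huniv
    omega
  · rw [sum_add_single_one]
    split_ifs with hdJ
    · calc ∑ i ∈ J, x i + 1 ≤ ∑ i, x i + 1 := by gcongr; exact subset_univ J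
        _ ≤ rk univ := hlt
        _ = rk {d} := hd.symm
        _ ≤ rk J := hP.2.1 {d} J (singleton_subset_iff.2 hdJ)
    · exact hx J

theorem isIndepVec_add_indicatorVec_insert_iff (hP : IsPolymatroid rk) {d : α}
    (hd : rk {d} = rk univ) {S : Finset α} (hdS : d ∉ S) :
    IsIndepVec rk (x + indicatorVec (insert d S)) ↔
      IsIndepVec rk (x + indicatorVec S) ∧ ∑ i, x i + #S < rk univ := by
  rw [indicatorVec_insert hdS, ← add_assoc, isIndepVec_add_single_iff hP hd,
    sum_add_indicatorVec, univ_inter]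

-- The rank formula for the matroid of all `S` with `x + 1_S` independent, restricted to `E`.
theorem IsIndepVec.exists_indicatorVec_add_card_eq (hP : IsPolymatroid rk) (hx : IsIndepVec rk x)
    (E : Finset α) : ∃ S ⊆ E, IsIndepVec rk (x + indicatorVec S) ∧
      ∃ T, ∑ i ∈ T, x i + #S = rk T + #(E \ T) := by
  classical
  obtain ⟨S, hS, hmax⟩ :=
    ({S ∈ E.powerset | IsIndepVec rk (x + indicatorVec S)} : Finset (Finset α)).exists_maximal
      ⟨∅, by simp [indicatorVec_empty, hx]⟩
  simp only [mem_filter, mem_powerset] at hS hmax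
  obtain ⟨hSE, hxS⟩ := hS
  obtain ⟨T, hT, htight⟩ := hxS.exists_tight_superset hP (F := E \ S) <| by
    intro e he
    obtain ⟨heE, heS⟩ := mem_sdiff.1 he
    refine hxS.exists_tight_of_not_add_single fun hadd => heS ?_
    rw [add_assoc, ← indicatorVec_insert heS] at hadd
    exact hmax ⟨insert_subset heE hSE, hadd⟩ (subset_insert e S) (mem_insert_self e S)
  refine ⟨S, hSE, hxS, T, ?_⟩
  have hdiff : E \ T = S \ T :=
    (sdiff_subset_sdiff hSE subset_rfl).antisymm' fun i hi => by
      obtain ⟨hiE, hiT⟩ := mem_sdiff.1 hi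
      exact mem_sdiff.2 ⟨by_contra fun hiS => hiT (hT (mem_sdiff.2 ⟨hiE, hiS⟩)), hiT⟩
  have hcard := card_sdiff_add_card_inter S T
  rw [sum_add_indicatorVec, inter_comm] at htight
  rw [hdiff]
  omega

theorem exists_indicatorVec_card_eq_iff (hP : IsPolymatroid rk) (E : Finset α) {c : ℕ}
    (hc : c + ∑ i, x i = rk univ) :
    (∃ S ⊆ E, IsIndepVec rk (x + indicatorVec S) ∧ #S = c) ↔
      IsIndepVec rk x ∧ ∀ J, c + ∑ i ∈ J, x i ≤ rk J + #(E \ J) := by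
  constructor
  · rintro ⟨S, hSE, hS, rfl⟩
    refine ⟨hS.anti le_self_add, fun J => ?_⟩
    have hJ := hS J
    have hcard := card_sdiff_add_card_inter S J
    have hle : #(S \ J) ≤ #(E \ J) := card_le_card (sdiff_subset_sdiff hSE subset_rfl)
    rw [sum_add_indicatorVec, inter_comm] at hJ
    omega
  · rintro ⟨hx, hJ⟩
    obtain ⟨S, hSE, hS, T, hT⟩ := hx.exists_indicatorVec_add_card_eq hP E
    refine ⟨S, hSE, hS, ?_⟩
    have hTc := hJ T
    have huniv := hS univ
    rw [sum_add_indicatorVec, univ_inter] at huniv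
    omega

end Independence

section Coefficients

variable {α : Type*} [Fintype α]

theorem finite_setOf_sum_le (r : ℕ) : {κ : α → ℕ | ∑ i, κ i ≤ r}.Finite := by
  classical
  exact (Set.finite_Iic fun _ => r).subset fun κ hκ i =>
    (single_le_sum (f := κ) (fun _ _ => Nat.zero_le _) (mem_univ i)).trans hκ

variable {K : Type*} [Field K] [CharZero K] [DecidableEq α] {rk : Finset α → ℕ}

open Classical in
theorem multiBinomUpper_coeff_eq_card (hP : IsPolymatroid rk) {d : α}
    (hd : rk {d} = rk univ) {a : (α → ℕ) → K}
    (ha : ∑ᶠ (κ : α → ℕ) (_ : (fun i => (κ i : ℝ)) ∈ indepPolytope rk), multiBinomLower K κ =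
      ∑ᶠ (κ : α → ℕ) (_ : ∑ i, κ i ≤ rk univ),
        C ((-1) ^ (rk univ - ∑ i, κ i) * a κ) * multiBinomUpper K κ)
    {κ : α → ℕ} (hκ : ∑ i, κ i ≤ rk univ) :
    a κ = #{S | d ∉ S ∧ IsIndepVec rk (κ + indicatorVec S) ∧ #S = rk univ - ∑ i, κ i} := by
  have hcard : ∀ (κ : α → ℕ) (S : Finset α), IsIndepVec rk (κ + indicatorVec S) →
      ∑ i, κ i + #S ≤ rk univ := fun κ S h => by
    simpa only [sum_add_indicatorVec, univ_inter] using h univ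
  simp only [natCast_mem_indepPolytope, ← smul_eq_C_mul] at ha
  have hcoeff := multiBinomUpper_coeff_eq_sum (I := {κ | IsIndepVec rk κ})
    (finite_setOf_sum_le (rk univ)) (fun κ S h => (Nat.le_add_right _ _).trans (hcard κ S h)) ha hκ
  refine mul_left_cancel₀ (pow_ne_zero (rk univ - ∑ i, κ i) (neg_ne_zero.2 one_ne_zero))
    (hcoeff.trans ?_)
  refine sum_neg_one_pow_card_of_insert_iff (fun S hS => ?_) fun S hdS => ?_
  · exact Nat.le_sub_of_add_le' (hcard κ S hS)
  · rw [Set.mem_ofPred_eq, isIndepVec_add_indicatorVec_insert_iff hP hd hdS, Nat.lt_sub_iff_add_lt']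
    rfl

theorem multiBinomUpper_coeff_ne_zero_iff (hP : IsPolymatroid rk) {d : α}
    (hd : rk {d} = rk univ) {a : (α → ℕ) → K}
    (ha : ∑ᶠ (κ : α → ℕ) (_ : (fun i => (κ i : ℝ)) ∈ indepPolytope rk), multiBinomLower K κ =
      ∑ᶠ (κ : α → ℕ) (_ : ∑ i, κ i ≤ rk univ),
        C ((-1) ^ (rk univ - ∑ i, κ i) * a κ) * multiBinomUpper K κ)
    {κ : α → ℕ} (hκ : ∑ i, κ i ≤ rk univ) :
    a κ ≠ 0 ↔
      ∃ S ⊆ univ.erase d, IsIndepVec rk (κ + indicatorVec S) ∧ #S = rk univ - ∑ i, κ i := by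
  rw [multiBinomUpper_coeff_eq_card hP hd ha hκ]
  simp [subset_erase]

end Coefficients

section MonotoneClosure

variable {α : Type*}

/-- The largest monotone minorant `A ↦ min {g B | A ⊆ B}` of a set function. For submodular `g` it
is a rank function defining the same polytope in the nonnegative orthant as `g`. -/
noncomputable def monotoneClosure (g : Finset α → ℕ) (A : Finset α) : ℕ :=
  ⨅ B : Set.Ici A, g B

variable {g : Finset α → ℕ} {A B : Finset α}

theorem monotoneClosure_le (h : A ⊆ B) : monotoneClosure g A ≤ g B :=
  ciInf_le' (fun B : Set.Ici A => g B) ⟨B, h⟩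

theorem exists_monotoneClosure_eq (g : Finset α → ℕ) (A : Finset α) :
    ∃ B, A ⊆ B ∧ monotoneClosure g A = g B :=
  have ⟨B, hB⟩ := ciInf_mem fun B : Set.Ici A => g B
  ⟨B, B.2, hB.symm⟩

theorem monotoneClosure_mono (h : A ⊆ B) : monotoneClosure g A ≤ monotoneClosure g B := by
  obtain ⟨C, hBC, hC⟩ := exists_monotoneClosure_eq g B
  exact hC ▸ monotoneClosure_le (h.trans hBC)

theorem isPolymatroid_monotoneClosure [Fintype α] [DecidableEq α] (hempty : g ∅ = 0)
    (hsub : ∀ I J, g (I ∩ J) + g (I ∪ J) ≤ g I + g J) : IsPolymatroid (monotoneClosure g) := by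
  refine ⟨Nat.le_zero.1 (hempty ▸ monotoneClosure_le subset_rfl), fun _ _ => monotoneClosure_mono,
    fun I J => ?_⟩
  obtain ⟨C, hIC, hC⟩ := exists_monotoneClosure_eq g I
  obtain ⟨D, hJD, hD⟩ := exists_monotoneClosure_eq g J
  calc monotoneClosure g (I ∩ J) + monotoneClosure g (I ∪ J)
      ≤ g (C ∩ D) + g (C ∪ D) := add_le_add (monotoneClosure_le (inter_subset_inter hIC hJD))
        (monotoneClosure_le (union_subset_union hIC hJD))
    _ ≤ g C + g D := hsub C D
    _ = monotoneClosure g I + monotoneClosure g J := by rw [hC, hD]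

theorem isIndepVec_monotoneClosure_iff {x : α → ℕ} :
    IsIndepVec (monotoneClosure g) x ↔ IsIndepVec g x := by
  refine ⟨fun h J => (h J).trans (monotoneClosure_le subset_rfl), fun h J => ?_⟩
  obtain ⟨B, hJB, hB⟩ := exists_monotoneClosure_eq g J
  exact hB ▸ (sum_le_sum_of_subset hJB).trans (h B)

theorem monotoneClosure_univ [Fintype α] : monotoneClosure g univ = g univ := by
  obtain ⟨B, hB, h⟩ := exists_monotoneClosure_eq g univ
  rwa [univ_subset_iff.1 hB] at h

theorem natCast_mem_basePolytope_monotoneClosure [Fintype α] {x : α → ℕ} :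
    (fun i => (x i : ℝ)) ∈ basePolytope (monotoneClosure g) ↔
      ∑ i, x i = g univ ∧ IsIndepVec g x := by
  rw [natCast_mem_basePolytope, monotoneClosure_univ, isIndepVec_monotoneClosure_iff]

end MonotoneClosure

section Transfer

variable {m : ℕ} {rk : Finset (Fin m) → ℕ}

/-- The part of `A ⊆ {0, 1, …, m}` in `{1, …, m}`, reindexed by `Fin m`. -/
def finsetTail (A : Finset (Fin (m + 1))) : Finset (Fin m) :=
  {i | i.succ ∈ A}

/-- The submodular function on `{0, 1, …, m}` bounding the vectors which arise from the independent
vectors of `rk` by moving at most one unit from each coordinate in `E` to the coordinate `0`. -/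
def transferRank (rk : Finset (Fin m) → ℕ) (E : Finset (Fin m)) (A : Finset (Fin (m + 1))) : ℕ :=
  rk (finsetTail A) + if 0 ∈ A then #(E \ finsetTail A) else 0

theorem finsetTail_inter (A B : Finset (Fin (m + 1))) :
    finsetTail (A ∩ B) = finsetTail A ∩ finsetTail B := by
  ext i
  simp [finsetTail]

theorem finsetTail_union (A B : Finset (Fin (m + 1))) :
    finsetTail (A ∪ B) = finsetTail A ∪ finsetTail B := by
  ext i
  simp [finsetTail]

theorem finsetTail_map_succEmb (J : Finset (Fin m)) : finsetTail (J.map (Fin.succEmb m)) = J := by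
  ext i
  simp [finsetTail]

theorem finsetTail_insert_zero (A : Finset (Fin (m + 1))) :
    finsetTail (insert 0 A) = finsetTail A := by
  ext i
  simp [finsetTail]

theorem sum_cons_eq (c : ℕ) (x : Fin m → ℕ) (A : Finset (Fin (m + 1))) :
    ∑ i ∈ A, (Fin.cons c x : Fin (m + 1) → ℕ) i =
      (if 0 ∈ A then c else 0) + ∑ i ∈ finsetTail A, x i := by
  rw [finsetTail, sum_filter, ← univ_inter A, ← sum_ite_mem, Fin.sum_univ_succ]
  simp only [univ_inter, Fin.cons_zero, Fin.cons_succ]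

theorem transferRank_empty (hP : IsPolymatroid rk) (E : Finset (Fin m)) :
    transferRank rk E ∅ = 0 := by
  simp [transferRank, finsetTail, hP.1]

theorem transferRank_univ (rk : Finset (Fin m) → ℕ) (E : Finset (Fin m)) :
    transferRank rk E univ = rk univ := by
  simp [transferRank, finsetTail]

theorem transferRank_submodular (hP : IsPolymatroid rk) (E : Finset (Fin m))
    (A B : Finset (Fin (m + 1))) :
    transferRank rk E (A ∩ B) + transferRank rk E (A ∪ B) ≤
      transferRank rk E A + transferRank rk E B := by
  have hrk := hP.2.2 (finsetTail A) (finsetTail B)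
  have hmod := card_union_add_card_inter (E \ finsetTail A) (E \ finsetTail B)
  rw [← sdiff_inter_distrib_right, ← sdiff_union_distrib] at hmod
  have hleA : #(E \ (finsetTail A ∪ finsetTail B)) ≤ #(E \ finsetTail A) :=
    card_le_card (sdiff_subset_sdiff subset_rfl subset_union_left)
  have hleB : #(E \ (finsetTail A ∪ finsetTail B)) ≤ #(E \ finsetTail B) :=
    card_le_card (sdiff_subset_sdiff subset_rfl subset_union_right)
  simp only [transferRank, finsetTail_inter, finsetTail_union, mem_inter, mem_union]
  split_ifs <;> first | omega | tauto

theorem isIndepVec_transferRank_cons_iff {E : Finset (Fin m)} {c : ℕ} {x : Fin m → ℕ} :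
    IsIndepVec (transferRank rk E) (Fin.cons c x : Fin (m + 1) → ℕ) ↔
      IsIndepVec rk x ∧ ∀ J, c + ∑ i ∈ J, x i ≤ rk J + #(E \ J) := by
  simp only [IsIndepVec, sum_cons_eq, transferRank]
  refine ⟨fun h => ⟨fun J => ?_, fun J => ?_⟩, fun ⟨hx, hc⟩ A => ?_⟩
  · simpa [finsetTail_map_succEmb] using h (J.map (Fin.succEmb m))
  · simpa [finsetTail_insert_zero, finsetTail_map_succEmb] using
      h (insert 0 (J.map (Fin.succEmb m)))
  · have hxA := hx (finsetTail A)
    have hcA := hc (finsetTail A)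
    split_ifs <;> omega

theorem cons_mem_basePolytope_transfer_iff (hP : IsPolymatroid rk) {E : Finset (Fin m)} {c : ℕ}
    {x : Fin m → ℕ} :
    (fun i => ((Fin.cons c x : Fin (m + 1) → ℕ) i : ℝ)) ∈
        basePolytope (monotoneClosure (transferRank rk E)) ↔
      c + ∑ i, x i = rk univ ∧ ∃ S ⊆ E, IsIndepVec rk (x + indicatorVec S) ∧ #S = c := by
  rw [natCast_mem_basePolytope_monotoneClosure, transferRank_univ, Fin.sum_cons,
    isIndepVec_transferRank_cons_iff]
  exact and_congr_right fun hc => (exists_indicatorVec_card_eq_iff hP E hc).symm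

end Transfer

/-- For a polymatroid `P` of rank `r` on `[m]` with `rk_P({i}) = r` for some `i`, the support
`{(κ, r - |κ|) : a_κ ≠ 0}` of the homogenization `H̃ = Σ_κ a_κ t^κ t₀^{r-|κ|}` (where the `a_κ`
are defined by `Σ_{κ ∈ I(P)∩ℤ^m} t^{(κ)} = Σ_κ (-1)^{r-|κ|} a_κ t^{[κ]}`, and `t₀` is placed in
coordinate `0` of `{0,1,…,m}`) is the set of lattice points of the base polytope of a
polymatroid on the `(m+1)`-element set `{0,1,…,m}`. -/
theorem support_of_transformed_snapper_is_M_convex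
    {m r : ℕ} (rk : Finset (Fin m) → ℕ) (hP : IsPolymatroid rk)
    (hrank : rk Finset.univ = r) (hfull : ∃ i : Fin m, rk {i} = r)
    (a : (Fin m → ℕ) → ℤ)
    (ha : (∑ᶠ (κ : Fin m → ℕ) (_ : (fun i => (κ i : ℝ)) ∈ indepPolytope rk),
            ∏ i, binomLower (MvPolynomial.X i) (κ i)) =
          ∑ᶠ (κ : Fin m → ℕ) (_ : ∑ i, κ i ≤ r),
            MvPolynomial.C ((-1 : ℚ) ^ (r - ∑ i, κ i) * (a κ : ℚ)) *
              ∏ i, binomUpper (MvPolynomial.X i) (κ i)) :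
    ∃ rkQ : Finset (Fin (m + 1)) → ℕ, IsPolymatroid rkQ ∧
      ∀ e : Fin (m + 1) → ℕ,
        ((∃ κ : Fin m → ℕ, (∑ i, κ i ≤ r) ∧ a κ ≠ 0 ∧ e = Fin.cons (r - ∑ i, κ i) κ) ↔
          (fun i => (e i : ℝ)) ∈ basePolytope rkQ) := by
  subst hrank
  obtain ⟨d, hd⟩ := hfull
  have hcoeff {κ : Fin m → ℕ} (hκ : ∑ i, κ i ≤ rk univ) : a κ ≠ 0 ↔
      ∃ S ⊆ univ.erase d, IsIndepVec rk (κ + indicatorVec S) ∧ #S = rk univ - ∑ i, κ i :=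
    (Int.cast_ne_zero (α := ℚ)).symm.trans
      (multiBinomUpper_coeff_ne_zero_iff (a := fun κ => (a κ : ℚ)) hP hd ha hκ)
  refine ⟨monotoneClosure (transferRank rk (univ.erase d)),
    isPolymatroid_monotoneClosure (transferRank_empty hP _) (transferRank_submodular hP _), ?_⟩
  rw [Fin.forall_fin_succ_pi]
  intro c x
  rw [cons_mem_basePolytope_transfer_iff hP]
  constructor
  · rintro ⟨κ, hκ, haκ, hcons⟩
    obtain ⟨rfl, rfl⟩ := Fin.cons_inj.1 hcons
    exact ⟨Nat.sub_add_cancel hκ, (hcoeff hκ).1 haκ⟩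
  · rintro ⟨hsum, hS⟩
    obtain rfl := Nat.eq_sub_of_add_eq hsum
    have hx : ∑ i, x i ≤ rk univ := by omega
    exact ⟨x, hx, (hcoeff hx).2 hS, rfl⟩
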